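/- arXiv:2505.05009 — 3 statements merged into one kernel-verified Lean document; each statement's English description precedes it below -/
import Mathlib

section
/- Let G be a finite simple graph with n ≥ 1 vertices and let d_G = (1/n)·∑_{v} deg(v) be its average degree. Then G contains an independent set of size at least n/(1 + d_G). -/
/-- A finset of vertices is an independent set of the simple graph `G` if no two
distinct elements of it are adjacent. -/
def SimpleGraph.IsIndepFinset {V : Type*} (G : SimpleGraph V) (I : Finset V) : Prop :=
  ∀ x ∈ I, ∀ y ∈ I, x ≠ y → ¬ G.Adj x y

/-! Process the vertices greedily, always picking a remaining vertex of smallest degree and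
discarding its closed neighbourhood. Give each vertex the weight `1 / (deg + 1)`: the neighbourhood
discarded with `v` has at most `deg v + 1` vertices, each of weight at most `1 / (deg v + 1)`, so
every pick uses up total weight at most one. Hence the picked vertices number at least
`∑ 1 / (deg v + 1)` (the Caro–Wei bound), which by Cauchy–Schwarz is at least `n / (1 + d)`. -/

open Finset

section Greedy

variable {V : Type*} {G : SimpleGraph V}

theorem isIndepFinset_iff_isIndepSet {I : Finset V} :
    G.IsIndepFinset I ↔ G.IsIndepSet (I : Set V) :=
  Iff.rfl

theorem isIndepSet_insert_of_forall_not_adj {s : Set V} {v : V} (hs : G.IsIndepSet s)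
    (hv : ∀ x ∈ s, ¬ G.Adj v x) : G.IsIndepSet (insert v s) :=
  hs.insert fun x hx _ ↦ ⟨hv x hx, fun h ↦ hv x hx h.symm⟩

theorem exists_isIndepSet_sum_le_card {R : Type*} [AddCommMonoidWithOne R] [PartialOrder R]
    [IsOrderedAddMonoid R] [DecidableEq V] [DecidableRel G.Adj] (w : V → R) (S : Finset V)
    (hw : ∀ T ⊆ S, T.Nonempty → ∃ v ∈ T, ∑ x ∈ T with x = v ∨ G.Adj v x, w x ≤ 1) :
    ∃ I ⊆ S, G.IsIndepSet (I : Set V) ∧ ∑ x ∈ S, w x ≤ #I := by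
  induction S using Finset.strongInduction with
  | H S ih =>
    obtain rfl | hS := S.eq_empty_or_nonempty
    · exact ⟨∅, by simp⟩
    obtain ⟨v, hvS, hv⟩ := hw S Subset.rfl hS
    set S' := {x ∈ S | ¬ (x = v ∨ G.Adj v x)}
    have hS'S : S' ⊂ S := filter_ssubset.2 ⟨v, hvS, by simp⟩
    obtain ⟨I, hIS', hI, hsum⟩ := ih S' hS'S fun T hT ↦ hw T (hT.trans hS'S.subset)
    have hfar : ∀ x ∈ I, ¬ (x = v ∨ G.Adj v x) := fun x hx ↦ (mem_filter.1 (hIS' hx)).2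
    have hvI : v ∉ I := fun h ↦ hfar v h (.inl rfl)
    refine ⟨insert v I, insert_subset hvS (hIS'.trans hS'S.subset), ?_, ?_⟩
    · rw [coe_insert]
      exact isIndepSet_insert_of_forall_not_adj hI fun x hx h ↦ hfar x hx (.inr h)
    · calc
        ∑ x ∈ S, w x = ∑ x ∈ S', w x + ∑ x ∈ S with x = v ∨ G.Adj v x, w x := by
          rw [add_comm, sum_filter_add_sum_filter_not]
        _ ≤ #I + 1 := add_le_add hsum hv
        _ = #(insert v I) := by rw [card_insert_of_notMem hvI, Nat.cast_succ]

end Greedy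

section CaroWei

variable {V K : Type*} {G : SimpleGraph V} [G.LocallyFinite]
  [Semifield K] [LinearOrder K] [IsStrictOrderedRing K]

theorem card_filter_eq_or_adj_le_degree_add_one [DecidableEq V] [DecidableRel G.Adj]
    (S : Finset V) (v : V) : #{x ∈ S | x = v ∨ G.Adj v x} ≤ G.degree v + 1 :=
  calc
    #{x ∈ S | x = v ∨ G.Adj v x} ≤ #(insert v (G.neighborFinset v)) :=
      card_le_card fun x hx ↦ by simpa using (mem_filter.1 hx).2
    _ ≤ G.degree v + 1 := by
      simpa only [G.card_neighborFinset_eq_degree] using card_insert_le v (G.neighborFinset v)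

theorem sum_inv_degree_add_one_le_one_of_forall_degree_le [DecidableEq V] [DecidableRel G.Adj]
    {S : Finset V} {v : V} (hv : ∀ x ∈ S, G.degree v ≤ G.degree x) :
    ∑ x ∈ S with x = v ∨ G.Adj v x, (G.degree x + 1 : K)⁻¹ ≤ 1 := by
  have hcard : (#{x ∈ S | x = v ∨ G.Adj v x} : K) ≤ G.degree v + 1 :=
    mod_cast card_filter_eq_or_adj_le_degree_add_one S v
  calc
    ∑ x ∈ S with x = v ∨ G.Adj v x, (G.degree x + 1 : K)⁻¹
      ≤ #{x ∈ S | x = v ∨ G.Adj v x} • (G.degree v + 1 : K)⁻¹ := by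
        refine sum_le_card_nsmul _ _ _ fun x hx ↦ ?_
        gcongr
        exact hv x (mem_filter.1 hx).1
    _ ≤ 1 := by
        rw [nsmul_eq_mul]
        exact mul_inv_le_one_of_le₀ hcard (by positivity)

theorem exists_isIndepSet_sum_inv_degree_add_one_le_card (S : Finset V) :
    ∃ I ⊆ S, G.IsIndepSet (I : Set V) ∧ ∑ x ∈ S, (G.degree x + 1 : K)⁻¹ ≤ #I := by
  classical
  refine exists_isIndepSet_sum_le_card _ S fun T _ hT ↦ ?_
  obtain ⟨v, hvT, hv⟩ := T.exists_min_image (G.degree ·) hT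
  exact ⟨v, hvT, sum_inv_degree_add_one_le_one_of_forall_degree_le hv⟩

end CaroWei

theorem sq_card_div_sum_le_sum_inv {ι K : Type*} [Semifield K] [LinearOrder K]
    [IsStrictOrderedRing K] [ExistsAddOfLE K] (s : Finset ι) {f : ι → K} (hf : ∀ i ∈ s, 0 < f i) :
    (#s : K) ^ 2 / ∑ i ∈ s, f i ≤ ∑ i ∈ s, (f i)⁻¹ := by
  simpa using sq_sum_div_le_sum_sq_div s (fun _ ↦ 1) hf

/-- **Turán's theorem (independent set version)**: a finite simple graph on `n ≥ 1`
vertices with average degree `d_G` contains an independent set of size at least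
`n / (1 + d_G)`. -/
theorem turan_indep {V : Type*} [Fintype V] [DecidableEq V] (G : SimpleGraph V)
    [DecidableRel G.Adj] (n : ℕ) (hn : n = Fintype.card V) (hn1 : 1 ≤ n)
    (d : ℝ) (hd : d = (∑ v : V, (G.degree v : ℝ)) / n) :
    ∃ I : Finset V, G.IsIndepFinset I ∧ (n : ℝ) / (1 + d) ≤ I.card := by
  obtain ⟨I, -, hI, hcard⟩ :=
    exists_isIndepSet_sum_inv_degree_add_one_le_card (K := ℝ) (G := G) univ
  have hn0 : (n : ℝ) ≠ 0 := Nat.cast_ne_zero.2 (Nat.one_le_iff_ne_zero.1 hn1)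
  have hsum : ∑ v : V, (G.degree v + 1 : ℝ) = n * (1 + d) := by
    simp only [sum_add_distrib, sum_const, card_univ, ← hn, nsmul_one, hd]
    field_simp
    ring
  refine ⟨I, isIndepFinset_iff_isIndepSet.2 hI, ?_⟩
  calc
    (n : ℝ) / (1 + d) = n ^ 2 / ∑ v : V, (G.degree v + 1 : ℝ) := by
      rw [hsum, sq, mul_div_mul_left _ _ hn0]
    _ ≤ ∑ v : V, (G.degree v + 1 : ℝ)⁻¹ := by
      rw [hn, ← card_univ]
      exact sq_card_div_sum_le_sum_inv univ fun v _ ↦ by positivity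
    _ ≤ #I := hcard
end

section
/- Let U be a finite set and let Q and Q' be sets of unordered pairs of distinct elements of U. Let ℓ ≥ 1 and let S₁, …, S_ℓ be pairwise disjoint subsets of U, each independent with respect to Q, let S = S₁ ∪ ⋯ ∪ S_ℓ, and let P be a partition of U such that each Sᵢ is a block of P. Let N and ℓ' be positive integers with |Q ∪ Q'| ≥ |S|, N ≤ |S|²/(8·|Q ∪ Q'|), and ℓ' ≤ |S|/(2N). Then there exist ℓ' pairwise disjoint subsets S'₁, …, S'_{ℓ'} of S, each of cardinality N and each independent with respect to Q ∪ Q', and a partition P' of U with at most |P| + ℓ' blocks, such that: (1) each S'_j is a block of P'; and (2) for every pair {x, y} ∈ Q, x and y are in the same set of P if and only if x and y are in the same set of P'. -/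
section

variable {U : Type*} [Fintype U] [DecidableEq U]

/-- `P` is a partition of the finite type `U`: a finite collection of nonempty,
pairwise disjoint finsets covering `U`. -/
def IsPartitionOf (P : Finset (Finset U)) : Prop :=
  (∀ b ∈ P, b.Nonempty) ∧ (∀ b ∈ P, ∀ b' ∈ P, b ≠ b' → Disjoint b b') ∧
    ∀ x : U, ∃ b ∈ P, x ∈ b

/-- `x` and `y` lie in the same set of the partition `P`. -/
def SameSet (P : Finset (Finset U)) (x y : U) : Prop := ∃ b ∈ P, x ∈ b ∧ y ∈ b

/-- `I` is independent with respect to the set of unordered pairs `Q`: no unordered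
pair of distinct elements of `I` belongs to `Q`. -/
def IndepWrt (Q : Finset (Sym2 U)) (I : Finset U) : Prop :=
  ∀ x ∈ I, ∀ y ∈ I, x ≠ y → s(x, y) ∉ Q

/-!
View `T = Q ∪ Q'` as the edge set of a graph. Turán's theorem for the complement gives every vertex
set `R` an independent subset of size at least `|R|² / (|R| + 2|T|)`. Choose the `S'ⱼ` greedily:
since `2Nℓ' ≤ |S|`, at least `|S| / 2 + N` elements of `S` are still unused before each choice, and
together with `8N|T| ≤ |S|²` this makes the Turán bound at least `N`.

Now remove all elements of the `S'ⱼ` from the blocks of `P` and add the `S'ⱼ` as new blocks. A pair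
in `Q` that meets some `S'ⱼ` is separated before, because its endpoint in `S'ⱼ` lies in a
`Q`-independent block of `P`, and after, because `S'ⱼ` is `Q`-independent. Any other pair is
unaffected.
-/

open Finset Function

section IndependenceNumber

variable {V : Type*} [Fintype V]

theorem card_sq_eq_card_add_two_mul_card_edgeFinset (G : SimpleGraph V) [DecidableEq V]
    [DecidableRel G.Adj] :
    Fintype.card V ^ 2 = Fintype.card V + 2 * (#G.edgeFinset + #Gᶜ.edgeFinset) := by
  have hdegree (v : V) : 1 + (G.degree v + Gᶜ.degree v) = Fintype.card V := by
    have := G.degree_lt_card_verts v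
    rw [G.degree_compl]
    lia
  calc Fintype.card V ^ 2 = ∑ v : V, (1 + (G.degree v + Gᶜ.degree v)) := by
        simp [hdegree, sq]
    _ = Fintype.card V + 2 * (#G.edgeFinset + #Gᶜ.edgeFinset) := by
        simp only [sum_add_distrib, SimpleGraph.sum_degrees_eq_twice_card_edges, mul_add]
        simp

theorem two_mul_card_edgeFinset_le_of_cliqueFree {G : SimpleGraph V} [DecidableRel G.Adj] {r : ℕ}
    (hG : G.CliqueFree (r + 1)) :
    2 * r * #G.edgeFinset ≤ (r - 1) * Fintype.card V ^ 2 := by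
  have hturan := hG.card_edgeFinset_le
  simp only [← SimpleGraph.card_edgeFinset_turanGraph] at hturan
  grw [hturan, SimpleGraph.mul_card_edgeFinset_turanGraph_le]

theorem card_sq_le_indepNum_mul (G : SimpleGraph V) [DecidableRel G.Adj] :
    Fintype.card V ^ 2 ≤ G.indepNum * (Fintype.card V + 2 * #G.edgeFinset) := by
  classical
  have hfree : Gᶜ.CliqueFree (G.indepNum + 1) := fun t ht ↦ by
    obtain ⟨hindep, hcard⟩ := G.isNClique_compl.mp ht
    have := hindep.card_le_indepNum
    lia
  have hturan := two_mul_card_edgeFinset_le_of_cliqueFree hfree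
  have hsum := card_sq_eq_card_add_two_mul_card_edgeFinset G
  cases hr : G.indepNum with
  | zero =>
    rw [hr, zero_add, SimpleGraph.cliqueFree_one] at hfree
    simp
  | succ k =>
    rw [hr, Nat.add_sub_cancel] at hturan
    nlinarith

end IndependenceNumber

section IndependentSets

variable {α : Type*} {T : Finset (Sym2 α)}

theorem IndepWrt.mono {Q : Finset (Sym2 α)} {I J : Finset α} (h : IndepWrt T J) (hQ : Q ⊆ T)
    (hI : I ⊆ J) : IndepWrt Q I :=
  fun x hx y hy hxy hmem ↦ h x (hI hx) y (hI hy) hxy (hQ hmem)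

theorem exists_indepWrt_card_sq_le (T : Finset (Sym2 α)) (R : Finset α) :
    ∃ I ⊆ R, IndepWrt T I ∧ #R ^ 2 ≤ #I * (#R + 2 * #T) := by
  classical
  let G : SimpleGraph R := (SimpleGraph.fromEdgeSet (T : Set (Sym2 α))).induce (R : Set α)
  have hedges : #G.edgeFinset ≤ #T := by
    refine card_le_card_of_injOn (Sym2.map Subtype.val) (fun e he ↦ ?_)
      (Sym2.map.injective Subtype.val_injective).injOn
    induction e with
    | h x y =>
      have hadj : G.Adj x y := by simpa using he
      exact hadj.1
  obtain ⟨I, hI⟩ := G.exists_isNIndepSet_indepNum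
  refine ⟨I.map (Embedding.subtype _), map_subtype_subset I, ?_, ?_⟩
  · simp only [IndepWrt, mem_map, Embedding.subtype_apply]
    rintro _ ⟨x, hx, rfl⟩ _ ⟨y, hy, rfl⟩ hxy hmem
    exact hI.isIndepSet hx hy (ne_of_apply_ne _ hxy) ⟨hmem, hxy⟩
  · have hturan := card_sq_le_indepNum_mul G
    rw [Fintype.card_coe] at hturan
    rw [card_map, hI.card_eq]
    grw [hturan, hedges]

theorem exists_indepWrt_card_eq {R : Finset α} {N : ℕ} (hNR : N ≤ #R)
    (h : N * (#R + 2 * #T) ≤ #R ^ 2) : ∃ I ⊆ R, #I = N ∧ IndepWrt T I := by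
  obtain ⟨J, hJR, hJ, hcard⟩ := exists_indepWrt_card_sq_le T R
  have hNJ : N ≤ #J := by
    rcases Nat.eq_zero_or_pos #R with hR | hR
    · lia
    · exact Nat.le_of_mul_le_mul_right (h.trans hcard) (by lia)
  obtain ⟨I, hIJ, hI⟩ := exists_subset_card_eq hNJ
  exact ⟨I, hIJ.trans hJR, hI, hJ.mono Subset.rfl hIJ⟩

theorem exists_pairwise_disjoint_of_forall_subset {A : Finset α} {p : Finset α → Prop} {N L : ℕ}
    (h : ∀ R ⊆ A, #A + N ≤ #R + L * N → ∃ I ⊆ R, #I = N ∧ p I) :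
    ∃ S : Fin L → Finset α, Pairwise (Disjoint on S) ∧ ∀ j, S j ⊆ A ∧ #(S j) = N ∧ p (S j) := by
  classical
  induction L with
  | zero => exact ⟨finZeroElim, fun i ↦ i.elim0, fun i ↦ i.elim0⟩
  | succ L ih =>
    obtain ⟨S, hdisj, hS⟩ := ih fun R hR hcard ↦ h R hR (by lia)
    have hused : #(univ.biUnion S) ≤ L * N := by
      simpa using card_biUnion_le_card_mul univ S N fun j _ ↦ (hS j).2.1.le
    have hleft := le_card_sdiff (univ.biUnion S) A
    obtain ⟨I, hIR, hI⟩ := h (A \ univ.biUnion S) sdiff_subset (by lia)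
    have hIS (j : Fin L) : Disjoint I (S j) :=
      disjoint_sdiff_self_left.mono hIR (subset_biUnion_of_mem S (mem_univ j))
    refine ⟨Fin.cons I S, ?_, Fin.forall_fin_succ.mpr ⟨⟨hIR.trans sdiff_subset, hI⟩, hS⟩⟩
    intro i j hij
    cases i using Fin.cases <;> cases j using Fin.cases
    · exact absurd rfl hij
    · exact hIS _
    · exact (hIS _).symm
    · exact hdisj (ne_of_apply_ne _ hij)

theorem exists_pairwise_disjoint_indepWrt {A : Finset α} {N L : ℕ} (hN : N * (8 * #T) ≤ #A ^ 2)
    (hL : L * (2 * N) ≤ #A) :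
    ∃ S : Fin L → Finset α,
      Pairwise (Disjoint on S) ∧ ∀ j, S j ⊆ A ∧ #(S j) = N ∧ IndepWrt T (S j) := by
  refine exists_pairwise_disjoint_of_forall_subset fun R _ hcard ↦ ?_
  obtain ⟨d, hd⟩ : ∃ d, #R = N + d := Nat.exists_eq_add_of_le (by nlinarith)
  have hAd : #A ≤ 2 * d := by nlinarith
  have hT : N * (2 * #T) ≤ d ^ 2 := by
    grw [hAd] at hN
    lia
  exact exists_indepWrt_card_eq (by lia) (by rw [hd]; nlinarith)

end IndependentSets

section Partitions

variable {α ι : Type*} {P : Finset (Finset α)} {Q : Finset (Sym2 α)} {x y : α}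

theorem SameSet.symm (h : SameSet P x y) : SameSet P y x :=
  let ⟨b, hb, hx, hy⟩ := h
  ⟨b, hb, hy, hx⟩

theorem IsPartitionOf.sameSet_self (hP : IsPartitionOf P) (x : α) : SameSet P x x :=
  let ⟨b, hb, hx⟩ := hP.2.2 x
  ⟨b, hb, hx, hx⟩

theorem IsPartitionOf.eq_of_mem (hP : IsPartitionOf P) {b c : Finset α} (hb : b ∈ P) (hc : c ∈ P)
    (hxb : x ∈ b) (hxc : x ∈ c) : b = c := by
  by_contra hne
  exact disjoint_left.mp (hP.2.1 b hb c hc hne) hxb hxc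

theorem IsPartitionOf.not_sameSet_of_indepWrt (hP : IsPartitionOf P)
    (hx : ∃ b ∈ P, x ∈ b ∧ IndepWrt Q b) (hne : x ≠ y) (hxy : s(x, y) ∈ Q) : ¬SameSet P x y := by
  rintro ⟨c, hc, hxc, hyc⟩
  obtain ⟨b, hb, hxb, hindep⟩ := hx
  obtain rfl := hP.eq_of_mem hb hc hxb hxc
  exact hindep x hxc y hyc hne hxy

variable [DecidableEq α] [Fintype ι] {S : ι → Finset α}

/-- The blocks obtained from `P` by splitting off the sets `S i`: every block of `P` loses the
elements of `⋃ i, S i`, remainders that become empty are discarded, and the `S i` are added. -/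
def carve (P : Finset (Finset α)) (S : ι → Finset α) : Finset (Finset α) :=
  (P.image (· \ univ.biUnion S)).erase ∅ ∪ univ.image S

theorem mem_carve {b : Finset α} :
    b ∈ carve P S ↔ (b.Nonempty ∧ ∃ c ∈ P, c \ univ.biUnion S = b) ∨ ∃ i, S i = b := by
  simp [carve, nonempty_iff_ne_empty]

theorem apply_mem_carve (i : ι) : S i ∈ carve P S :=
  mem_carve.mpr (.inr ⟨i, rfl⟩)

theorem sdiff_mem_carve {c : Finset α} (hc : c ∈ P) (hxc : x ∈ c) (hx : x ∉ univ.biUnion S) :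
    c \ univ.biUnion S ∈ carve P S :=
  mem_carve.mpr (.inl ⟨⟨x, mem_sdiff.mpr ⟨hxc, hx⟩⟩, c, hc, rfl⟩)

theorem card_carve_le (P : Finset (Finset α)) (S : ι → Finset α) :
    #(carve P S) ≤ #P + Fintype.card ι := by
  unfold carve
  grw [card_union_le, card_erase_le, card_image_le, card_image_le, card_univ]

theorem isPartitionOf_carve (hP : IsPartitionOf P) (hne : ∀ i, (S i).Nonempty)
    (hS : Pairwise (Disjoint on S)) : IsPartitionOf (carve P S) := by
  have hrest (c : Finset α) (i : ι) : Disjoint (c \ univ.biUnion S) (S i) :=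
    disjoint_sdiff_self_left.mono_right (subset_biUnion_of_mem S (mem_univ i))
  refine ⟨fun b hb ↦ ?_, fun b hb b' hb' hbb' ↦ ?_, fun x ↦ ?_⟩
  · rcases mem_carve.mp hb with ⟨h, _⟩ | ⟨i, rfl⟩
    exacts [h, hne i]
  · rcases mem_carve.mp hb with ⟨_, c, hc, rfl⟩ | ⟨i, rfl⟩ <;>
      rcases mem_carve.mp hb' with ⟨_, c', hc', rfl⟩ | ⟨i', rfl⟩
    · exact (hP.2.1 c hc c' hc' (ne_of_apply_ne (· \ _) hbb')).mono sdiff_subset sdiff_subset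
    · exact hrest c i'
    · exact (hrest c' i).symm
    · exact hS (ne_of_apply_ne _ hbb')
  · by_cases hx : x ∈ univ.biUnion S
    · obtain ⟨i, _, hxi⟩ := mem_biUnion.mp hx
      exact ⟨S i, apply_mem_carve i, hxi⟩
    · obtain ⟨c, hc, hxc⟩ := hP.2.2 x
      exact ⟨_, sdiff_mem_carve hc hxc hx, mem_sdiff.mpr ⟨hxc, hx⟩⟩

theorem sameSet_carve_iff_of_notMem (hx : x ∉ univ.biUnion S) (hy : y ∉ univ.biUnion S) :
    SameSet (carve P S) x y ↔ SameSet P x y := by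
  constructor
  · rintro ⟨b, hb, hxb, hyb⟩
    rcases mem_carve.mp hb with ⟨_, c, hc, rfl⟩ | ⟨i, rfl⟩
    · exact ⟨c, hc, sdiff_subset hxb, sdiff_subset hyb⟩
    · exact absurd (mem_biUnion.mpr ⟨i, mem_univ i, hxb⟩) hx
  · rintro ⟨c, hc, hxc, hyc⟩
    exact ⟨_, sdiff_mem_carve hc hxc hx, mem_sdiff.mpr ⟨hxc, hx⟩, mem_sdiff.mpr ⟨hyc, hy⟩⟩

theorem sameSet_carve_iff (hP : IsPartitionOf P) (hcarve : IsPartitionOf (carve P S))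
    (hS : ∀ i, IndepWrt Q (S i)) (hcover : ∀ i, ∀ z ∈ S i, ∃ b ∈ P, z ∈ b ∧ IndepWrt Q b)
    (hxy : s(x, y) ∈ Q) : SameSet P x y ↔ SameSet (carve P S) x y := by
  rcases eq_or_ne x y with rfl | hne
  · exact iff_of_true (hP.sameSet_self x) (hcarve.sameSet_self x)
  have hseparated {u v : α} (hu : u ∈ univ.biUnion S) (huv : u ≠ v) (h : s(u, v) ∈ Q) :
      ¬SameSet P u v ∧ ¬SameSet (carve P S) u v := by
    obtain ⟨i, _, hui⟩ := mem_biUnion.mp hu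
    exact ⟨hP.not_sameSet_of_indepWrt (hcover i u hui) huv h,
      hcarve.not_sameSet_of_indepWrt ⟨S i, apply_mem_carve i, hui, hS i⟩ huv h⟩
  by_cases hx : x ∈ univ.biUnion S
  · exact iff_of_false (hseparated hx hne hxy).1 (hseparated hx hne hxy).2
  by_cases hy : y ∈ univ.biUnion S
  · obtain ⟨hnot, hnot'⟩ := hseparated hy hne.symm (Sym2.eq_swap ▸ hxy)
    exact iff_of_false (hnot ·.symm) (hnot' ·.symm)
  exact (sameSet_carve_iff_of_notMem hx hy).symm

end Partitions

theorem carving_lemma_general {α : Type*} [DecidableEq α] {Q Q' : Finset (Sym2 α)}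
    {P : Finset (Finset α)} (hP : IsPartitionOf P) {A : Finset α}
    (hA : ∀ x ∈ A, ∃ b ∈ P, x ∈ b ∧ IndepWrt Q b) {N L : ℕ} (hN : 0 < N)
    (hNle : N * (8 * #(Q ∪ Q')) ≤ #A ^ 2) (hL : L * (2 * N) ≤ #A) :
    ∃ (S : Fin L → Finset α) (P' : Finset (Finset α)),
      (∀ j, S j ⊆ A) ∧
      (∀ j j', j ≠ j' → Disjoint (S j) (S j')) ∧
      (∀ j, #(S j) = N) ∧
      (∀ j, IndepWrt (Q ∪ Q') (S j)) ∧
      IsPartitionOf P' ∧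
      #P' ≤ #P + L ∧
      (∀ j, S j ∈ P') ∧
      (∀ x y : α, s(x, y) ∈ Q → (SameSet P x y ↔ SameSet P' x y)) := by
  obtain ⟨S, hdisj, hS⟩ := exists_pairwise_disjoint_indepWrt hNle hL
  have hcarve : IsPartitionOf (carve P S) :=
    isPartitionOf_carve hP (fun j ↦ card_pos.mp (hN.trans_eq (hS j).2.1.symm)) hdisj
  refine ⟨S, carve P S, fun j ↦ (hS j).1, fun _ _ h ↦ hdisj h, fun j ↦ (hS j).2.1,
    fun j ↦ (hS j).2.2, hcarve, ?_, apply_mem_carve, fun x y hxy ↦ ?_⟩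
  · simpa using card_carve_le P S
  · exact sameSet_carve_iff hP hcarve (fun j ↦ (hS j).2.2.mono subset_union_left Subset.rfl)
      (fun j z hz ↦ hA z ((hS j).1 hz)) hxy

/-- **The Carving Lemma.** -/
theorem carving_lemma (Q Q' : Finset (Sym2 U))
    (hQ : ∀ e ∈ Q, ¬ e.IsDiag) (hQ' : ∀ e ∈ Q', ¬ e.IsDiag)
    (ℓ : ℕ) (hℓ : 1 ≤ ℓ) (S : Fin ℓ → Finset U)
    (hSdisj : ∀ i j, i ≠ j → Disjoint (S i) (S j))
    (hSindep : ∀ i, IndepWrt Q (S i))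
    (Sun : Finset U) (hSun : Sun = (Finset.univ : Finset (Fin ℓ)).biUnion S)
    (P : Finset (Finset U)) (hP : IsPartitionOf P) (hSP : ∀ i, S i ∈ P)
    (N ℓ' : ℕ) (hN : 0 < N) (hℓ' : 0 < ℓ')
    (hQbig : Sun.card ≤ (Q ∪ Q').card)
    (hNle : (N : ℝ) ≤ (Sun.card : ℝ) ^ 2 / (8 * (Q ∪ Q').card))
    (hℓ'le : (ℓ' : ℝ) ≤ (Sun.card : ℝ) / (2 * N)) :
    ∃ (S' : Fin ℓ' → Finset U) (P' : Finset (Finset U)),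
      (∀ j, S' j ⊆ Sun) ∧
      (∀ j j', j ≠ j' → Disjoint (S' j) (S' j')) ∧
      (∀ j, (S' j).card = N) ∧
      (∀ j, IndepWrt (Q ∪ Q') (S' j)) ∧
      IsPartitionOf P' ∧
      P'.card ≤ P.card + ℓ' ∧
      (∀ j, S' j ∈ P') ∧
      (∀ x y : U, s(x, y) ∈ Q → (SameSet P x y ↔ SameSet P' x y)) := by
  exact carving_lemma_general hP
    (fun x hx ↦ let ⟨i, _, hxi⟩ := mem_biUnion.mp (hSun ▸ hx); ⟨S i, hSP i, hxi, hSindep i⟩) hN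
    (mod_cast mul_le_of_le_div₀ (by positivity) (by positivity) hNle)
    (mod_cast mul_le_of_le_div₀ (by positivity) (by positivity) hℓ'le)

end
end

section
/- Let k ≥ 2 be an integer, U a finite set, Q a set of unordered pairs of distinct elements of U, P a partition of U with at most k − 2 blocks, and S ⊆ U such that for every pair {u, v} ∈ Q with {u, v} ∩ S ≠ ∅, the elements u and v are in different blocks of P. Let Q' be a set of unordered pairs of distinct elements of U such that for any two distinct partitions of U each with at most k blocks, some pair in Q ∪ Q' has u, v in the same set of exactly one of the two partitions. Then every unordered pair of distinct elements of S that does not belong to Q belongs to Q'. -/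
section

variable {U : Type*} [Fintype U] [DecidableEq U]

/-!
Colour the elements with three colours in two ways: in the first, `x` and `y` get a colour each and
all other elements share the third; in the second, `y` is recoloured like `x`. The fibres of the two
colourings are distinct partitions into at most three blocks, and `{x, y}` is the only pair on which
they disagree. So a query set telling apart all partitions into at most `k ≥ 3` blocks contains
every pair. A partition of a nonempty set into at most `k - 2` blocks forces `k ≥ 3`.
-/

section

variable {α β : Type*}

theorem IsPartitionOf.card_pos [Nonempty α] {P : Finset (Finset α)} (hP : IsPartitionOf P) :
    0 < P.card :=
  let ⟨b, hb, _⟩ := hP.2.2 (Classical.arbitrary α)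
  Finset.card_pos.mpr ⟨b, hb⟩

section FiberPartition

variable [Fintype α]

open Classical in
/-- The partition of `α` into the nonempty fibres of a colouring `f : α → β`. It is indexed by the
elements of `α` rather than by the colours, so that unused colours give no empty block. -/
noncomputable def fiberPartition (f : α → β) : Finset (Finset α) :=
  Finset.univ.image fun a ↦ Finset.univ.filter (f · = f a)

open Classical in
theorem mem_fiberPartition {f : α → β} {s : Finset α} :
    s ∈ fiberPartition f ↔ ∃ a, Finset.univ.filter (f · = f a) = s := by
  simp only [fiberPartition, Finset.mem_image, Finset.mem_univ, true_and]

theorem isPartitionOf_fiberPartition (f : α → β) : IsPartitionOf (fiberPartition f) := by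
  classical
  simp only [IsPartitionOf, mem_fiberPartition]
  refine ⟨?nonempty, ?disjoint, fun x ↦ ⟨_, ⟨x, rfl⟩, by simp⟩⟩
  case nonempty =>
    rintro _ ⟨a, rfl⟩
    exact ⟨a, by simp⟩
  case disjoint =>
    rintro _ ⟨a, rfl⟩ _ ⟨a', rfl⟩ hne
    have hcolor : f a ≠ f a' := fun h ↦ hne (by rw [h])
    exact Finset.disjoint_filter.mpr fun _ _ hb hb' ↦ hcolor (hb.symm.trans hb')

theorem sameSet_fiberPartition_iff {f : α → β} {u v : α} :
    SameSet (fiberPartition f) u v ↔ f u = f v := by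
  classical
  simp only [SameSet, mem_fiberPartition]
  constructor
  · rintro ⟨_, ⟨a, rfl⟩, hu, hv⟩
    exact (Finset.mem_filter.mp hu).2.trans (Finset.mem_filter.mp hv).2.symm
  · exact fun h ↦ ⟨_, ⟨v, rfl⟩, by simp [h], by simp⟩

theorem card_fiberPartition_le [Fintype β] (f : α → β) :
    (fiberPartition f).card ≤ Fintype.card β := by
  classical
  have hsub : fiberPartition f ⊆ Finset.univ.image fun c ↦ Finset.univ.filter (f · = c) := by
    intro s hs
    obtain ⟨a, rfl⟩ := mem_fiberPartition.mp hs
    exact Finset.mem_image.mpr ⟨f a, Finset.mem_univ _, by congr⟩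
  exact (Finset.card_le_card hsub).trans Finset.card_image_le

end FiberPartition

/-- The pairs in `Q` distinguish the partitions of `α` into at most `k` blocks: any two distinct
ones disagree on whether the elements of some pair in `Q` lie in one block. -/
def DistinguishesPartitions (Q : Set (Sym2 α)) (k : ℕ) : Prop :=
  ∀ P₁ P₂ : Finset (Finset α), IsPartitionOf P₁ → IsPartitionOf P₂ →
    P₁.card ≤ k → P₂.card ≤ k → P₁ ≠ P₂ →
    ∃ u v : α, u ≠ v ∧ s(u, v) ∈ Q ∧ Xor (SameSet P₁ u v) (SameSet P₂ u v)

theorem DistinguishesPartitions.exists_mem_xor_eq [Finite α] [Fintype β] {Q : Set (Sym2 α)} {k : ℕ}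
    (hQ : DistinguishesPartitions Q k) (hβ : Fintype.card β ≤ k) {f g : α → β} {x y : α}
    (hf : f x ≠ f y) (hg : g x = g y) :
    ∃ u v : α, s(u, v) ∈ Q ∧ Xor (f u = f v) (g u = g v) := by
  cases nonempty_fintype α
  have hne : fiberPartition f ≠ fiberPartition g := by
    intro h
    have hsame : SameSet (fiberPartition g) x y := sameSet_fiberPartition_iff.mpr hg
    exact hf (sameSet_fiberPartition_iff.mp (h ▸ hsame))
  obtain ⟨u, v, -, huv, hxor⟩ := hQ _ _ (isPartitionOf_fiberPartition f)
    (isPartitionOf_fiberPartition g) ((card_fiberPartition_le f).trans hβ)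
    ((card_fiberPartition_le g).trans hβ) hne
  exact ⟨u, v, huv, by simpa only [sameSet_fiberPartition_iff] using hxor⟩

section Coloring

variable [DecidableEq α]

/-- The colouring giving `x` and `y` a colour each and all other elements a third one. -/
def isolatingColoring (x y z : α) : Fin 3 :=
  if z = x then 0 else if z = y then 1 else 2

/-- The colouring obtained from `isolatingColoring x y` by recolouring `y` like `x`. -/
def mergingColoring (x y z : α) : Fin 3 :=
  if z = x ∨ z = y then 0 else 2

theorem isolatingColoring_left_ne_right {x y : α} (hxy : x ≠ y) :
    isolatingColoring x y x ≠ isolatingColoring x y y := by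
  simp [isolatingColoring, hxy.symm]

theorem mergingColoring_left_eq_right (x y : α) :
    mergingColoring x y x = mergingColoring x y y := by
  simp [mergingColoring]

theorem mergingColoring_eq_of_isolatingColoring_eq {x y u v : α}
    (h : isolatingColoring x y u = isolatingColoring x y v) :
    mergingColoring x y u = mergingColoring x y v := by
  grind [isolatingColoring, mergingColoring]

theorem mk_eq_of_mergingColoring_eq_of_isolatingColoring_ne {x y u v : α}
    (hmerge : mergingColoring x y u = mergingColoring x y v)
    (hisolate : isolatingColoring x y u ≠ isolatingColoring x y v) :
    s(u, v) = s(x, y) := by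
  grind [isolatingColoring, mergingColoring]

end Coloring

theorem final_round_covers_unqueried_pairs_general [Finite α] {k : ℕ} (hk : 3 ≤ k)
    {Q : Set (Sym2 α)} (hQ : DistinguishesPartitions Q k) {x y : α} (hxy : x ≠ y) :
    s(x, y) ∈ Q := by
  classical
  obtain ⟨u, v, huv, ⟨hisolate, hmerge⟩ | ⟨hmerge, hisolate⟩⟩ :=
    hQ.exists_mem_xor_eq (by simpa using hk) (isolatingColoring_left_ne_right hxy)
      (mergingColoring_left_eq_right x y)
  · exact absurd (mergingColoring_eq_of_isolatingColoring_eq hisolate) hmerge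
  · rwa [← mk_eq_of_mergingColoring_eq_of_isolatingColoring_ne hmerge hisolate]

end

/-- If every queried pair of `Q` touching `S` is cut by the partition `P` (which has
at most `k - 2` blocks), and `Q ∪ Q'` distinguishes every two distinct partitions
into at most `k` blocks, then `Q'` must contain every unordered pair of distinct
elements of `S` not already in `Q`. -/
theorem final_round_covers_unqueried_pairs (k : ℕ) (hk : 2 ≤ k)
    (Q Q' : Finset (Sym2 U))
    (hQ : ∀ e ∈ Q, ¬ e.IsDiag) (hQ' : ∀ e ∈ Q', ¬ e.IsDiag)
    (P : Finset (Finset U)) (hP : IsPartitionOf P) (hPk : P.card ≤ k - 2)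
    (S : Finset U)
    (hcut : ∀ u v : U, s(u, v) ∈ Q → (u ∈ S ∨ v ∈ S) → ¬ SameSet P u v)
    (hdist : ∀ P₁ P₂ : Finset (Finset U), IsPartitionOf P₁ → IsPartitionOf P₂ →
      P₁.card ≤ k → P₂.card ≤ k → P₁ ≠ P₂ →
      ∃ u v : U, u ≠ v ∧ s(u, v) ∈ Q ∪ Q' ∧ Xor' (SameSet P₁ u v) (SameSet P₂ u v)) :
    ∀ x ∈ S, ∀ y ∈ S, x ≠ y → s(x, y) ∉ Q → s(x, y) ∈ Q' := by
  intro x _ y _ hxy hxyQ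
  have : Nonempty U := ⟨x⟩
  have hQQ' : DistinguishesPartitions ((Q ∪ Q' : Finset (Sym2 U)) : Set (Sym2 U)) k := hdist
  have hk3 : 3 ≤ k := by have := hP.card_pos; omega
  have hmem := final_round_covers_unqueried_pairs_general hk3 hQQ' hxy
  exact (Finset.mem_union.mp hmem).resolve_left hxyQ

end
end
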